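/- Let $Z$ be a positive random variable with $\mathbb{E}[Z^a]<\infty$ for all $a\in(-\varepsilon,\varepsilon)$ for some $\varepsilon>0$, and let $(Y_t)_{t\ge 0}$ be positive random variables independent of $Z$. If $Y_t Z$ converges in distribution to a positive random variable $U$ as $t\to\infty$, then $Y_t$ converges in distribution to some positive random variable $Y$, and the law of $Y$ is the unique law such that for $Y$ independent of $Z$ one has $YZ \overset{d}{=} U$. -/

import Mathlib

open MeasureTheory ProbabilityTheory Filter Real Set
open scoped ENNReal NNReal Topology

/-!
Taking logarithms turns `YZ` into a sum, so the question is about convolution with the law `ζ` of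
`log Z` on the space of probability measures with the weak topology. If `X + Y` and `Y` are tight,
then so is `X`; by Prokhorov's theorem, convolution with `ζ` is therefore a proper map. It is
injective because characteristic functions are continuous, convolution multiplies them, and that of
`ζ`, being analytic by the moment condition, is nonzero on a dense set. A proper continuous
injection into a metrizable space is a closed embedding: the limit of a convergent net `ηₜ * ζ` is
again of the form `η * ζ`, and `ηₜ → η`.
-/

section Convolution

/-- The law of the product (for `addConv`, of the sum) of independent elements with laws `μ` and
`ν`, bundled so that it acts on the space of probability measures with its weak topology. -/
@[to_additive]
noncomputable def mulConv {M : Type*} [Monoid M] [MeasurableSpace M] [MeasurableMul₂ M]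
    (μ ν : ProbabilityMeasure M) : ProbabilityMeasure M :=
  ⟨(μ : Measure M) ∗ₘ (ν : Measure M), inferInstance⟩

section Group

variable {G : Type*} [AddGroup G] [TopologicalSpace G] [IsTopologicalAddGroup G]
  [MeasurableSpace G] [BorelSpace G]

lemma continuous_addConv_right [SecondCountableTopology G]
    [TopologicalSpace.PseudoMetrizableSpace G] (ζ : ProbabilityMeasure G) :
    Continuous fun η : ProbabilityMeasure G => addConv η ζ :=
  (ProbabilityMeasure.continuous_map continuous_add).comp
    (ProbabilityMeasure.continuous_prod.comp (by fun_prop : Continuous fun η => (η, ζ)))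

lemma isTightMeasureSet_of_addConv_right [PolishSpace G] (ζ : ProbabilityMeasure G)
    {S : Set (ProbabilityMeasure G)}
    (hS : IsTightMeasureSet {((addConv η ζ : ProbabilityMeasure G) : Measure G) | η ∈ S}) :
    IsTightMeasureSet {((η : ProbabilityMeasure G) : Measure G) | η ∈ S} := by
  let joint (η : ProbabilityMeasure G) : Measure (G × G) :=
    ((η : Measure G).prod (ζ : Measure G)).map fun p => (p.1 + p.2, p.2)
  have map_fst η : (joint η).fst = addConv η ζ := by
    rw [Measure.fst, Measure.map_map measurable_fst (by fun_prop)]; rfl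
  have map_snd η : (joint η).snd = ζ := by
    rw [Measure.snd, Measure.map_map measurable_snd (by fun_prop)]
    exact Measure.snd_prod
  have map_sub η : (joint η).map (fun p => p.1 - p.2) = η := by
    rw [Measure.map_map (by fun_prop) (by fun_prop)]
    simp only [Function.comp_def, add_sub_cancel_right]
    exact Measure.fst_prod
  have joint_tight : IsTightMeasureSet (joint '' S) := by
    refine .prodMk (hS.subset ?_)
      ((isTightMeasureSet_singleton (μ := (ζ : Measure G))).subset ?_)
    · rintro _ ⟨_, ⟨η, hη, rfl⟩, rfl⟩
      exact ⟨η, hη, (map_fst η).symm⟩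
    · rintro _ ⟨_, ⟨η, -, rfl⟩, rfl⟩
      exact map_snd η
  refine (joint_tight.map continuous_sub).subset ?_
  rintro _ ⟨η, hη, rfl⟩
  exact ⟨_, ⟨η, hη, rfl⟩, map_sub η⟩

lemma isProperMap_addConv_right [PolishSpace G] (ζ : ProbabilityMeasure G) :
    IsProperMap fun η : ProbabilityMeasure G => addConv η ζ := by
  let := TopologicalSpace.upgradeIsCompletelyMetrizable G
  have hcont := continuous_addConv_right ζ
  refine isProperMap_iff_isCompact_preimage.2 ⟨hcont, fun K hK => ?_⟩
  have hclosed := hK.isClosed.preimage hcont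
  have htight : IsTightMeasureSet {(κ : Measure G) | κ ∈ K} :=
    isTightMeasureSet_of_isCompact_closure (by rwa [hK.isClosed.closure_eq])
  have hpre := isCompact_closure_of_isTightMeasureSet <|
    isTightMeasureSet_of_addConv_right ζ (S := (addConv · ζ) ⁻¹' K) <| htight.subset <| by
      rintro _ ⟨η, hη, rfl⟩
      exact ⟨_, hη, rfl⟩
  rwa [hclosed.closure_eq] at hpre

end Group

variable {E : Type*} [NormedAddCommGroup E] [InnerProductSpace ℝ E] [CompleteSpace E]
  [SecondCountableTopology E] [MeasurableSpace E] [BorelSpace E]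

lemma injective_addConv_right {ζ : ProbabilityMeasure E}
    (hζ : Dense {t | charFun (ζ : Measure E) t ≠ 0}) :
    Function.Injective fun η : ProbabilityMeasure E => addConv η ζ := by
  intro η η' h
  have charFun_mul t : charFun (η : Measure E) t * charFun (ζ : Measure E) t =
      charFun (η' : Measure E) t * charFun (ζ : Measure E) t := by
    simpa only [addConv, ProbabilityMeasure.coe_mk, charFun_conv] using
      congrArg (fun κ : ProbabilityMeasure E => charFun (κ : Measure E) t) h
  refine ProbabilityMeasure.toMeasure_injective <| Measure.ext_of_charFun <|
    Continuous.ext_on hζ continuous_charFun continuous_charFun fun t ht => ?_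
  exact mul_right_cancel₀ ht (charFun_mul t)

theorem isClosedEmbedding_addConv_right {ζ : ProbabilityMeasure E}
    (hζ : Dense {t | charFun (ζ : Measure E) t ≠ 0}) :
    Topology.IsClosedEmbedding fun η : ProbabilityMeasure E => addConv η ζ :=
  .of_continuous_injective_isClosedMap (continuous_addConv_right ζ)
    (injective_addConv_right hζ) (isProperMap_addConv_right ζ).isClosedMap

end Convolution

section CharFun

variable {Ω : Type*} {mΩ : MeasurableSpace Ω} {μ : Measure Ω} {X : Ω → ℝ}

lemma analyticOnNhd_charFun_map (hX : AEMeasurable X μ)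
    (h0 : 0 ∈ interior (integrableExpSet X μ)) :
    AnalyticOnNhd ℝ (charFun (μ.map X)) univ := by
  intro t _
  have outer : AnalyticAt ℝ (complexMGF X μ) (t * Complex.I) :=
    (analyticAt_complexMGF (by simpa using h0)).restrictScalars
  have inner : AnalyticAt ℝ (fun s : ℝ => (s : ℂ) * Complex.I) t :=
    (Complex.ofRealCLM.analyticAt t).mul analyticAt_const
  exact (outer.fun_comp_of_eq inner rfl).congr (.of_forall (complexMGF_mul_I hX))

lemma dense_charFun_map_ne_zero [IsProbabilityMeasure μ] (hX : AEMeasurable X μ)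
    (h0 : 0 ∈ interior (integrableExpSet X μ)) :
    Dense {t | charFun (μ.map X) t ≠ 0} := by
  change Dense {t | charFun (μ.map X) t = 0}ᶜ
  rw [← interior_eq_empty_iff_dense_compl, eq_empty_iff_forall_notMem]
  intro t ht
  have vanish := (analyticOnNhd_charFun_map hX h0).eqOn_zero_of_preconnected_of_eventuallyEq_zero
    isPreconnected_univ (mem_univ t) (mem_interior_iff_mem_nhds.1 ht)
  have mass : charFun (μ.map X) 0 ≠ 0 := by
    simp [charFun_zero, Measure.real, Measure.map_apply_of_aemeasurable hX]
  exact mass (vanish (mem_univ 0))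

lemma zero_mem_interior_integrableExpSet_log (hpos : ∀ᵐ ω ∂μ, 0 < X ω) {ε : ℝ} (hε : 0 < ε)
    (hmom : ∀ a ∈ Ioo (-ε) ε, Integrable (fun ω => X ω ^ a) μ) :
    0 ∈ interior (integrableExpSet (fun ω => log (X ω)) μ) := by
  refine interior_maximal (fun a ha => (hmom a ha).congr ?_) isOpen_Ioo ⟨neg_neg_of_pos hε, hε⟩
  filter_upwards [hpos] with ω hω
  rw [rpow_def_of_pos hω, mul_comm]

end CharFun

lemma isEmbedding_map {X Y : Type*} [TopologicalSpace X] [TopologicalSpace Y] [MeasurableSpace X]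
    [MeasurableSpace Y] [BorelSpace X] [BorelSpace Y] [HasOuterApproxClosed X]
    [HasOuterApproxClosed Y] [FirstCountableTopology (ProbabilityMeasure Y)] {g : X → Y}
    (hg : Topology.IsEmbedding g) :
    Topology.IsEmbedding fun ν : ProbabilityMeasure X =>
      ν.map hg.continuous.measurable.aemeasurable := by
  have hcont := ProbabilityMeasure.continuous_map hg.continuous
  refine Topology.IsInducing.isEmbedding (Topology.isInducing_iff_nhds.2 fun ν => le_antisymm ?_ ?_)
  · exact map_le_iff_le_comap.1 hcont.continuousAt
  · rw [← tendsto_id']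
    refine tendsto_of_forall_isOpen_le_liminf' (μs := id) (L := comap _ _) fun G hG => ?_
    obtain ⟨O, hO, rfl⟩ := hg.isOpen_iff.1 hG
    simp only [id, ← Measure.map_apply hg.continuous.measurable hO.measurableSet]
    exact ProbabilityMeasure.le_liminf_measure_open_of_tendsto tendsto_comap hO

section Exponential

/-- The law of `exp X` when `X` has law `η`; every law of a positive variable is of this form. -/
noncomputable def expLaw (η : ProbabilityMeasure ℝ) : ProbabilityMeasure ℝ :=
  η.map measurable_exp.aemeasurable

/-- The law of `log X` when `X` has law `κ`; only meaningful for laws of positive variables,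
since `Real.log` is even. -/
noncomputable def logLaw (κ : ProbabilityMeasure ℝ) : ProbabilityMeasure ℝ :=
  κ.map measurable_log.aemeasurable

lemma isEmbedding_expLaw : Topology.IsEmbedding expLaw :=
  isEmbedding_map isOpenEmbedding_exp.isEmbedding

lemma expLaw_logLaw {κ : ProbabilityMeasure ℝ} (hκ : ∀ᵐ x ∂(κ : Measure ℝ), 0 < x) :
    expLaw (logLaw κ) = κ := by
  refine ProbabilityMeasure.toMeasure_injective ?_
  calc ((κ : Measure ℝ).map log).map exp = (κ : Measure ℝ).map (exp ∘ log) :=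
        Measure.map_map measurable_exp measurable_log
    _ = (κ : Measure ℝ).map id := Measure.map_congr (hκ.mono fun _ => exp_log)
    _ = κ := Measure.map_id

lemma expLaw_addConv (η ζ : ProbabilityMeasure ℝ) :
    expLaw (addConv η ζ) = mulConv (expLaw η) (expLaw ζ) := by
  refine ProbabilityMeasure.toMeasure_injective ?_
  change (((η : Measure ℝ).prod (ζ : Measure ℝ)).map fun p : ℝ × ℝ => p.1 + p.2).map exp =
    (((η : Measure ℝ).map exp).prod ((ζ : Measure ℝ).map exp)).map fun p : ℝ × ℝ => p.1 * p.2
  rw [Measure.map_prod_map _ _ measurable_exp measurable_exp,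
    Measure.map_map measurable_exp measurable_add,
    Measure.map_map measurable_mul (measurable_exp.prodMap measurable_exp)]
  simp only [Function.comp_def, exp_add, Prod.map_fst, Prod.map_snd]

lemma ae_pos_of_mulConv_right {ν ζ : ProbabilityMeasure ℝ}
    (hζ : ∀ᵐ x ∂(ζ : Measure ℝ), 0 < x) (hνζ : ∀ᵐ x ∂(mulConv ν ζ : Measure ℝ), 0 < x) :
    ∀ᵐ x ∂(ν : Measure ℝ), 0 < x := by
  have mul_pos : ∀ᵐ p ∂(ν : Measure ℝ).prod (ζ : Measure ℝ), 0 < p.1 * p.2 :=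
    ae_of_ae_map measurable_mul.aemeasurable hνζ
  have snd_pos : ∀ᵐ p ∂(ν : Measure ℝ).prod (ζ : Measure ℝ), 0 < p.2 :=
    Measure.quasiMeasurePreserving_snd.ae hζ
  have fst_pos : ∀ᵐ p ∂(ν : Measure ℝ).prod (ζ : Measure ℝ), 0 < p.1 := by
    filter_upwards [mul_pos, snd_pos] with p hp hp₂ using pos_of_mul_pos_left hp hp₂.le
  rw [← Measure.fst_prod (μ := (ν : Measure ℝ)) (ν := (ζ : Measure ℝ))]
  exact (ae_map_iff measurable_fst.aemeasurable measurableSet_Ioi).2 fst_pos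

end Exponential

section Factor

variable {ζ : ProbabilityMeasure ℝ}

theorem eq_of_mulConv_right_eq (hζ : ∀ᵐ x ∂(ζ : Measure ℝ), 0 < x)
    (hdense : Dense {t | charFun (logLaw ζ : Measure ℝ) t ≠ 0}) {ν ν' : ProbabilityMeasure ℝ}
    (hpos : ∀ᵐ x ∂(mulConv ν ζ : Measure ℝ), 0 < x) (h : mulConv ν ζ = mulConv ν' ζ) :
    ν = ν' := by
  have hν := expLaw_logLaw (ae_pos_of_mulConv_right hζ hpos)
  have hν' := expLaw_logLaw (ae_pos_of_mulConv_right hζ (h ▸ hpos))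
  have hlog : addConv (logLaw ν) (logLaw ζ) = addConv (logLaw ν') (logLaw ζ) :=
    isEmbedding_expLaw.injective <| by
      simp only [expLaw_addConv, hν, hν', expLaw_logLaw hζ, h]
  rw [← hν, injective_addConv_right hdense hlog, hν']

theorem exists_tendsto_of_tendsto_mulConv_right {ι : Type*} {l : Filter ι} [l.NeBot]
    (hζ : ∀ᵐ x ∂(ζ : Measure ℝ), 0 < x)
    (hdense : Dense {t | charFun (logLaw ζ : Measure ℝ) t ≠ 0})
    {α : ι → ProbabilityMeasure ℝ} {κ : ProbabilityMeasure ℝ}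
    (hα : ∀ i, ∀ᵐ x ∂(α i : Measure ℝ), 0 < x) (hκ : ∀ᵐ x ∂(κ : Measure ℝ), 0 < x)
    (h : Tendsto (fun i => mulConv (α i) ζ) l (𝓝 κ)) :
    ∃ ν, Tendsto α l (𝓝 ν) ∧ mulConv ν ζ = κ := by
  have hlog := isClosedEmbedding_addConv_right hdense
  have tendsto_log : Tendsto (fun i => addConv (logLaw (α i)) (logLaw ζ)) l (𝓝 (logLaw κ)) := by
    rw [isEmbedding_expLaw.tendsto_nhds_iff]
    simpa only [Function.comp_def, expLaw_addConv, expLaw_logLaw, hα, hζ, hκ] using h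
  obtain ⟨η, hη : addConv η (logLaw ζ) = logLaw κ⟩ :=
    hlog.isClosed_range.mem_of_tendsto tendsto_log (.of_forall fun i => ⟨_, rfl⟩)
  refine ⟨expLaw η, ?_, ?_⟩
  · rw [← hη] at tendsto_log
    have tendsto_η : Tendsto (fun i => logLaw (α i)) l (𝓝 η) :=
      hlog.tendsto_nhds_iff.2 tendsto_log
    simpa only [Function.comp_def, expLaw_logLaw, hα] using
      (isEmbedding_expLaw.continuous.tendsto η).comp tendsto_η
  · rw [← expLaw_logLaw hκ, ← hη, expLaw_addConv, expLaw_logLaw hζ]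

end Factor

section RandomVariable

variable {Ω : Type*} [MeasurableSpace Ω] {P : ProbabilityMeasure Ω}

lemma tendsto_map_iff_forall_integral_tendsto {E ι : Type*} [TopologicalSpace E]
    [MeasurableSpace E] [OpensMeasurableSpace E] {l : Filter ι} {X : ι → Ω → E}
    (hX : ∀ i, AEMeasurable (X i) P) {κ : ProbabilityMeasure E} :
    Tendsto (fun i => P.map (hX i)) l (𝓝 κ) ↔ ∀ f : BoundedContinuousFunction E ℝ,
      Tendsto (fun i => ∫ ω, f (X i ω) ∂P) l (𝓝 (∫ x, f x ∂κ)) := by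
  rw [ProbabilityMeasure.tendsto_iff_forall_integral_tendsto]
  refine forall_congr' fun f => ?_
  simp only [ProbabilityMeasure.toMeasure_map,
    fun i => integral_map (hX i) f.continuous.measurable.aestronglyMeasurable]

lemma map_mul_eq_mulConv {M : Type*} [Monoid M] [MeasurableSpace M] [MeasurableMul₂ M]
    {X Y : Ω → M} (hX : Measurable X) (hY : Measurable Y) (h : IndepFun X Y P) :
    P.map (hX.mul hY).aemeasurable = mulConv (P.map hX.aemeasurable) (P.map hY.aemeasurable) :=
  ProbabilityMeasure.toMeasure_injective (h.map_mul_eq_map_mconv_map hX hY)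

lemma ae_pos_map {X : Ω → ℝ} (hX : AEMeasurable X P) (hpos : ∀ᵐ ω ∂(P : Measure Ω), 0 < X ω) :
    ∀ᵐ x ∂(P.map hX : Measure ℝ), 0 < x :=
  (ae_map_iff hX measurableSet_Ioi).2 hpos

lemma logLaw_map {X : Ω → ℝ} (hX : Measurable X) :
    (logLaw (P.map hX.aemeasurable) : Measure ℝ) = (P : Measure Ω).map fun ω => log (X ω) :=
  Measure.map_map measurable_log hX

lemma tendsto_mulConv_map {ι M : Type*} [Monoid M] [TopologicalSpace M] [MeasurableSpace M]
    [BorelSpace M] [MeasurableMul₂ M] {l : Filter ι} {Y : ι → Ω → M} {Z U : Ω → M}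
    (hY : ∀ i, Measurable (Y i)) (hZ : Measurable Z) (hU : Measurable U)
    (hindep : ∀ i, IndepFun (Y i) Z P)
    (hconv : ∀ f : BoundedContinuousFunction M ℝ,
      Tendsto (fun i => ∫ ω, f (Y i ω * Z ω) ∂P) l (𝓝 (∫ ω, f (U ω) ∂P))) :
    Tendsto (fun i => mulConv (P.map (hY i).aemeasurable) (P.map hZ.aemeasurable)) l
      (𝓝 (P.map hU.aemeasurable)) := by
  simp only [← map_mul_eq_mulConv (hY _) hZ (hindep _)]
  refine (tendsto_map_iff_forall_integral_tendsto _).2 fun f => ?_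
  rw [ProbabilityMeasure.toMeasure_map,
    integral_map hU.aemeasurable f.continuous.measurable.aestronglyMeasurable]
  exact hconv f

end RandomVariable

theorem stmt0_general {Ω ι : Type*} [MeasurableSpace Ω] (μ : Measure Ω) [IsProbabilityMeasure μ]
    {l : Filter ι} [l.NeBot] (Z U : Ω → ℝ) (Y : ι → Ω → ℝ)
    (hZ : Measurable Z) (hU : Measurable U) (hY : ∀ i, Measurable (Y i))
    (hZpos : ∀ᵐ ω ∂μ, 0 < Z ω) (hUpos : ∀ᵐ ω ∂μ, 0 < U ω) (hYpos : ∀ i, ∀ᵐ ω ∂μ, 0 < Y i ω)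
    (hdense : Dense {t | charFun (μ.map fun ω => log (Z ω)) t ≠ 0})
    (hindep : ∀ i, IndepFun (Y i) Z μ)
    (hconv : ∀ f : BoundedContinuousFunction ℝ ℝ,
      Tendsto (fun i => ∫ ω, f (Y i ω * Z ω) ∂μ) l (𝓝 (∫ ω, f (U ω) ∂μ))) :
    ∃ ν : Measure ℝ, IsProbabilityMeasure ν ∧ ν (Iic 0) = 0 ∧
      (∀ f : BoundedContinuousFunction ℝ ℝ,
        Tendsto (fun i => ∫ ω, f (Y i ω) ∂μ) l (𝓝 (∫ x, f x ∂ν))) ∧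
      Measure.map (fun p : ℝ × ℝ => p.1 * p.2) (ν.prod (μ.map Z)) = μ.map U ∧
      ∀ ν' : Measure ℝ, IsProbabilityMeasure ν' →
        Measure.map (fun p : ℝ × ℝ => p.1 * p.2) (ν'.prod (μ.map Z)) = μ.map U → ν' = ν := by
  let P : ProbabilityMeasure Ω := ⟨μ, inferInstance⟩
  have ζ_pos := ae_pos_map (P := P) hZ.aemeasurable hZpos
  have κ_pos := ae_pos_map (P := P) hU.aemeasurable hUpos
  have ζ_dense : Dense {t | charFun (logLaw (P.map hZ.aemeasurable) : Measure ℝ) t ≠ 0} := by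
    rwa [logLaw_map hZ]
  obtain ⟨ν, hν, hνζ⟩ := exists_tendsto_of_tendsto_mulConv_right ζ_pos ζ_dense
    (fun i => ae_pos_map (P := P) (hY i).aemeasurable (hYpos i)) κ_pos
    (tendsto_mulConv_map hY hZ hU hindep hconv)
  have νζ_pos := hνζ ▸ κ_pos
  refine ⟨ν, inferInstance, ?_, ?_, ?_, fun ν' _ hν' => ?_⟩
  · simpa [ae_iff, Iic_def] using ae_pos_of_mulConv_right ζ_pos νζ_pos
  · exact (tendsto_map_iff_forall_integral_tendsto _).1 hν
  · exact congrArg ProbabilityMeasure.toMeasure hνζ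
  · have hν'ζ : mulConv ⟨ν', ‹_›⟩ (P.map hZ.aemeasurable) = P.map hU.aemeasurable := Subtype.ext hν'
    exact congrArg Subtype.val
      (eq_of_mulConv_right_eq ζ_pos ζ_dense νζ_pos (hνζ.trans hν'ζ.symm)).symm

theorem stmt0 {Ω : Type*} [MeasurableSpace Ω] (μ : Measure Ω) [IsProbabilityMeasure μ]
    (Z U : Ω → ℝ) (Y : ℝ → Ω → ℝ)
    (hZ : Measurable Z) (hU : Measurable U) (hY : ∀ t, Measurable (Y t))
    (hZpos : ∀ᵐ ω ∂μ, 0 < Z ω) (hUpos : ∀ᵐ ω ∂μ, 0 < U ω)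
    (hYpos : ∀ t, ∀ᵐ ω ∂μ, 0 < Y t ω)
    (ε : ℝ) (hε : 0 < ε)
    (hmom : ∀ a ∈ Set.Ioo (-ε) ε, Integrable (fun ω => Z ω ^ a) μ)
    (hindep : ∀ t, IndepFun (Y t) Z μ)
    (hconv : ∀ f : BoundedContinuousFunction ℝ ℝ,
      Tendsto (fun t => ∫ ω, f (Y t ω * Z ω) ∂μ) atTop (𝓝 (∫ ω, f (U ω) ∂μ))) :
    ∃ ν : Measure ℝ, IsProbabilityMeasure ν ∧ ν (Set.Iic 0) = 0 ∧
      (∀ f : BoundedContinuousFunction ℝ ℝ,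
        Tendsto (fun t => ∫ ω, f (Y t ω) ∂μ) atTop (𝓝 (∫ x, f x ∂ν))) ∧
      Measure.map (fun p : ℝ × ℝ => p.1 * p.2) (ν.prod (Measure.map Z μ)) = Measure.map U μ ∧
      ∀ ν' : Measure ℝ, IsProbabilityMeasure ν' →
        Measure.map (fun p : ℝ × ℝ => p.1 * p.2) (ν'.prod (Measure.map Z μ)) = Measure.map U μ →
        ν' = ν :=
  stmt0_general μ Z U Y hZ hU hY hZpos hUpos hYpos (dense_charFun_map_ne_zero
    (by fun_prop) (zero_mem_interior_integrableExpSet_log hZpos hε hmom)) hindep hconv
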